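/- arXiv:1605.00873 — 6 statements merged into one kernel-verified Lean document; each statement's English description precedes it below -/
import Mathlib

section
/- Let θ > 0 and 0 < F < 1 be real numbers (so that log F < 0), and define L₀ = ( 1/θ - 2/(log F) - √( (2/(log F) - 1/θ)² + 4/(θ·log F) ) ) / 2. Then 0 < L₀ < 1/(2θ). (Note that the expression under the square root equals 1/θ² + 4/(log F)².) -/
/-- For `θ > 0` and `0 < F < 1` (so `log F < 0`), the critical point
`L₀ = (1/θ - 2/log F - √((2/log F - 1/θ)² + 4/(θ·log F)))/2`
of the total average rate function satisfies `0 < L₀ < 1/(2θ)`. -/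
theorem L0_pos_and_lt_half_inv_theta
    (θ F : ℝ) (hθ : 0 < θ) (hF0 : 0 < F) (hF1 : F < 1) :
    0 < (1 / θ - 2 / Real.log F
          - Real.sqrt ((2 / Real.log F - 1 / θ) ^ 2 + 4 / (θ * Real.log F))) / 2 ∧
    (1 / θ - 2 / Real.log F
          - Real.sqrt ((2 / Real.log F - 1 / θ) ^ 2 + 4 / (θ * Real.log F))) / 2
        < 1 / (2 * θ) := by
  have hlog : Real.log F < 0 := Real.log_neg hF0 hF1
  have ha : 0 < 1 / θ := by positivity
  have hb : 2 / Real.log F < 0 := div_neg_of_pos_of_neg two_pos hlog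
  have hcross : 4 / (θ * Real.log F) = 2 * (1 / θ) * (2 / Real.log F) := by
    rw [div_mul_eq_div_div]
    ring
  have hhalf : 1 / (2 * θ) = 1 / θ / 2 := by
    rw [div_div, mul_comm]
  rw [hcross, hhalf]
  generalize 1 / θ = a at *
  generalize 2 / Real.log F = b at *
  have hlt : Real.sqrt ((b - a) ^ 2 + 2 * a * b) < a - b := by
    rw [Real.sqrt_lt' (by linarith)]
    nlinarith [mul_neg_of_pos_of_neg ha hb]
  have hgt : -b < Real.sqrt ((b - a) ^ 2 + 2 * a * b) := by
    apply Real.lt_sqrt_of_sq_lt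
    nlinarith [mul_pos ha ha]
  constructor <;> linarith
end

section
/- Let θ > 0, C > 0 and 0 < F < 1 be real numbers, and let L₀ = ( 1/θ - 2/(log F) - √( 1/θ² + 4/(log F)² ) ) / 2. Then the total average rate function r_T(x) = x·(1 - xθ)·C·F^{x-1} is strictly increasing on [0, L₀] and strictly decreasing on [L₀, 1/θ]; consequently r_T attains its maximum over [0, 1/θ] at x = L₀. -/
/-- For `θ > 0`, `C > 0`, `0 < F < 1` and
`L₀ = (1/θ - 2/log F - √(1/θ² + 4/(log F)²))/2`, the total average rate function
`r_T(x) = x·(1 - xθ)·C·F^(x-1)` is strictly increasing on `[0, L₀]`, strictly decreasing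
on `[L₀, 1/θ]`, and hence attains its maximum over `[0, 1/θ]` at `x = L₀`. -/
theorem total_avg_rate_max_at_L0
    (θ C F : ℝ) (hθ : 0 < θ) (hC : 0 < C) (hF0 : 0 < F) (hF1 : F < 1) :
    let L₀ : ℝ := (1 / θ - 2 / Real.log F
        - Real.sqrt (1 / θ ^ 2 + 4 / Real.log F ^ 2)) / 2
    let rT : ℝ → ℝ := fun x => x * (1 - x * θ) * C * F ^ (x - 1)
    StrictMonoOn rT (Set.Icc 0 L₀) ∧ StrictAntiOn rT (Set.Icc L₀ (1 / θ)) ∧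
      ∀ x ∈ Set.Icc (0 : ℝ) (1 / θ), rT x ≤ rT L₀ := by
  intro L₀ rT
  have hl : Real.log F < 0 := Real.log_neg hF0 hF1
  set s : ℝ := Real.sqrt (1 / θ ^ 2 + 4 / Real.log F ^ 2) with hs
  have ha : 0 < 1 / θ := by positivity
  have hb : 0 < -(2 / Real.log F) := neg_pos.2 (div_neg_of_pos_of_neg two_pos hl)
  have hs0 : 0 ≤ s := Real.sqrt_nonneg _
  have hs2 : s ^ 2 = (1 / θ) ^ 2 + (-(2 / Real.log F)) ^ 2 := by
    rw [hs, Real.sq_sqrt (by positivity)]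
    ring
  have hL₀ : L₀ = (1 / θ - 2 / Real.log F - s) / 2 := rfl
  have hsa : 1 / θ < s := by nlinarith
  have hsb : -(2 / Real.log F) < s := by nlinarith
  have hL₀_pos : 0 < L₀ := by
    have : s < 1 / θ + -(2 / Real.log F) := by nlinarith [mul_pos ha hb]
    linarith
  have hL₀_lt : L₀ < 1 / θ := by linarith
  -- The other critical point lies to the right of `1 / θ`.
  set L₁ : ℝ := (1 / θ - 2 / Real.log F + s) / 2 with hL₁
  have hL₁_gt : 1 / θ < L₁ := by linarith
  have hfactor (x : ℝ) : 1 - 2 * θ * x + Real.log F * (x * (1 - x * θ)) =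
      -Real.log F * θ * ((x - L₀) * (x - L₁)) := by
    have hne : Real.log F ≠ 0 := hl.ne
    have hsum : L₀ + L₁ = 1 / θ - 2 / Real.log F := by rw [hL₀, hL₁]; ring
    have hprod : L₀ * L₁ = -(1 / (θ * Real.log F)) := by
      have : L₀ * L₁ = ((1 / θ - 2 / Real.log F) ^ 2 - s ^ 2) / 4 := by rw [hL₀, hL₁]; ring
      rw [this, hs2]
      field_simp
      ring
    have : (x - L₀) * (x - L₁) = x ^ 2 - (L₀ + L₁) * x + L₀ * L₁ := by ring
    rw [this, hsum, hprod]
    field_simp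
    ring
  have hderiv (x : ℝ) : HasDerivAt rT
      (C * F ^ (x - 1) * (-Real.log F * θ * ((x - L₀) * (x - L₁)))) x := by
    have hpow : HasDerivAt (fun y : ℝ => F ^ (y - 1)) (Real.log F * 1 * F ^ (x - 1)) x :=
      ((hasDerivAt_id x).sub_const 1).const_rpow hF0
    have hpoly := ((hasDerivAt_id x).mul
      (((hasDerivAt_id x).mul_const θ).const_sub 1)).mul_const C
    refine (hpoly.mul hpow).congr_deriv ?_
    rw [← hfactor]
    simp only [id, Pi.mul_apply]
    ring
  have hcont : Continuous rT :=
    continuous_iff_continuousAt.2 fun x => (hderiv x).continuousAt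
  have hscale (x : ℝ) : 0 < C * F ^ (x - 1) := mul_pos hC (Real.rpow_pos_of_pos hF0 _)
  have hcoef : 0 < -Real.log F * θ := mul_pos (neg_pos.2 hl) hθ
  have hmono : StrictMonoOn rT (Set.Icc 0 L₀) := by
    refine strictMonoOn_of_deriv_pos (convex_Icc _ _) hcont.continuousOn fun x hx => ?_
    rw [interior_Icc] at hx
    rw [(hderiv x).deriv]
    exact mul_pos (hscale x) (mul_pos hcoef
      (mul_pos_of_neg_of_neg (by linarith [hx.2]) (by linarith [hx.2])))
  have hanti : StrictAntiOn rT (Set.Icc L₀ (1 / θ)) := by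
    refine strictAntiOn_of_deriv_neg (convex_Icc _ _) hcont.continuousOn fun x hx => ?_
    rw [interior_Icc] at hx
    rw [(hderiv x).deriv]
    exact mul_neg_of_pos_of_neg (hscale x) (mul_neg_of_pos_of_neg hcoef
      (mul_neg_of_pos_of_neg (by linarith [hx.1]) (by linarith [hx.2])))
  refine ⟨hmono, hanti, fun x hx => ?_⟩
  rcases le_total x L₀ with h | h
  · exact hmono.monotoneOn ⟨hx.1, h⟩ ⟨hL₀_pos.le, le_rfl⟩ h
  · exact hanti.antitoneOn ⟨le_rfl, hL₀_lt.le⟩ ⟨h, hx.2⟩ h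
end

section
/- Let N ≥ 1, let S_L ⊆ ℝ^N denote the set of 0-1 vectors with exactly L coordinates equal to 1, let r : ℕ → ℝ be nonnegative, and let 1 ≤ L_I ≤ N. Assume L·r(L) ≤ L_I·r(L_I) for every L with L_I ≤ L ≤ N. Then for every such L and every s ∈ S_L, the point r(L)·s lies in the convex hull of {0} ∪ { r(L_I)·s' : s' ∈ S_{L_I} }. Consequently, every point of the set Ī = ⋃_{L_I < L ≤ N} { r(L)·s : s ∈ S_L } lies inside the convex hull of {0} ∪ ⋃_{1 ≤ ℓ ≤ L_I} { r(ℓ)·s' : s' ∈ S_ℓ }. -/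
/-- `schedSet N L` is the set of 0-1 vectors in `ℝ^N` with exactly `L` coordinates equal to 1
(equivalently, with `ℓ¹`-norm `L`). -/
def schedSet (N L : ℕ) : Set (Fin N → ℝ) :=
  {s | (∀ i, s i = 0 ∨ s i = 1) ∧ ∑ i, s i = L}

/-- Switching off one active coordinate of a vector of `schedSet N (L + 1)`. -/
lemma sub_single_mem_schedSet {N L : ℕ} {s : Fin N → ℝ} (hs : s ∈ schedSet N (L + 1))
    {i : Fin N} (hi : s i = 1) : s - Pi.single i 1 ∈ schedSet N L := by
  refine ⟨fun j => ?_, ?_⟩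
  · rcases eq_or_ne j i with rfl | hj
    · simp [hi]
    · simpa [hj] using hs.1 j
  · simp [Finset.sum_sub_distrib, hs.2]

/-- A vector with `L` active coordinates, scaled by `ℓ / L`, is a convex combination of vectors
with `ℓ ≤ L` active coordinates. -/
lemma div_smul_mem_convexHull_schedSet {N ℓ L : ℕ} (hℓ : 1 ≤ ℓ) (hL : ℓ ≤ L) :
    ∀ s ∈ schedSet N L, ((ℓ : ℝ) / L) • s ∈ convexHull ℝ (schedSet N ℓ) := by
  induction L, hL using Nat.le_induction with
  | base =>
    intro s hs
    rw [div_self (by positivity), one_smul]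
    exact subset_convexHull ℝ _ hs
  | succ L hL ih =>
    intro s hs
    have hL0 : (L : ℝ) ≠ 0 := by
      have : L ≠ 0 := by omega
      exact_mod_cast this
    have hind : ∀ i, (if s i = 1 then (1 : ℝ) else 0) = s i := fun i => by
      rcases hs.1 i with h | h <;> simp [h]
    have hcard : ((Finset.univ.filter fun i => s i = 1).card : ℝ) = L + 1 := by
      rw [Finset.card_filter]
      push_cast
      simp only [hind, hs.2]
      push_cast
      rfl
    have hsum : ∑ i with s i = 1, (Pi.single i 1 : Fin N → ℝ) = s := by
      ext j
      simpa [Finset.sum_apply, Pi.single_apply] using hind j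
    have key : ((ℓ : ℝ) / (L + 1 : ℕ)) • s = ∑ i with s i = 1,
        ((1 : ℝ) / (L + 1)) • (((ℓ : ℝ) / L) • (s - Pi.single i 1)) := by
      rw [← Finset.smul_sum, ← Finset.smul_sum, Finset.sum_sub_distrib, hsum, Finset.sum_const,
        ← Nat.cast_smul_eq_nsmul ℝ, hcard]
      ext j
      simp only [Pi.smul_apply, Pi.sub_apply, smul_eq_mul]
      push_cast
      field_simp
      ring
    rw [key]
    refine (convex_convexHull ℝ _).sum_mem (fun i _ => by positivity) ?_ fun i hi =>
      ih _ (sub_single_mem_schedSet hs (Finset.mem_filter.1 hi).2)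
    rw [Finset.sum_const, nsmul_eq_mul, hcard]
    field_simp

/-- If `r : ℕ → ℝ` is nonnegative, `1 ≤ L_I ≤ N` and `L·r(L) ≤ L_I·r(L_I)` for all
`L_I ≤ L ≤ N`, then for every such `L` and every `s ∈ S_L` the rate point `r(L) • s` lies in
the convex hull of `{0} ∪ { r(L_I) • s' : s' ∈ S_{L_I} }`; consequently every point of
`Ī = ⋃_{L_I < L ≤ N} { r(L) • s : s ∈ S_L }` lies inside the convex hull of
`{0} ∪ ⋃_{1 ≤ ℓ ≤ L_I} { r(ℓ) • s' : s' ∈ S_ℓ }`. -/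
theorem ratePoints_mem_convexHull
    (N L_I : ℕ) (hLI1 : 1 ≤ L_I) (hLIN : L_I ≤ N)
    (r : ℕ → ℝ) (hr : ∀ L, 0 ≤ r L)
    (hmax : ∀ L, L_I ≤ L → L ≤ N → (L : ℝ) * r L ≤ (L_I : ℝ) * r L_I) :
    (∀ L, L_I ≤ L → L ≤ N → ∀ s ∈ schedSet N L,
        r L • s ∈ convexHull ℝ ({0} ∪ (fun s' => r L_I • s') '' schedSet N L_I)) ∧
    (∀ x ∈ ⋃ L ∈ Set.Ioc L_I N, (fun s => r L • s) '' schedSet N L,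
        x ∈ convexHull ℝ
          ({0} ∪ ⋃ ℓ ∈ Set.Icc 1 L_I, (fun s' => r ℓ • s') '' schedSet N ℓ)) := by
  have first : ∀ L, L_I ≤ L → L ≤ N → ∀ s ∈ schedSet N L,
      r L • s ∈ convexHull ℝ ({0} ∪ (fun s' => r L_I • s') '' schedSet N L_I) := by
    intro L hL hLN s hs
    have hI : (0 : ℝ) < L_I := by exact_mod_cast hLI1
    have hLpos : (0 : ℝ) < L := by exact_mod_cast hLI1.trans hL
    have hle := hmax L hL hLN
    have hzero : (0 : Fin N → ℝ) ∈
        convexHull ℝ ({0} ∪ (fun s' => r L_I • s') '' schedSet N L_I) :=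
      subset_convexHull ℝ _ (Or.inl rfl)
    rcases (hr L_I).eq_or_lt with h0 | hpos
    · have hrL : r L = 0 := by
        rw [← h0, mul_zero] at hle
        exact le_antisymm (nonpos_of_mul_nonpos_right hle hLpos) (hr L)
      simpa [hrL] using hzero
    · have hmem : r L_I • (((L_I : ℝ) / L) • s) ∈
          convexHull ℝ ({0} ∪ (fun s' => r L_I • s') '' schedSet N L_I) := by
        refine convexHull_mono Set.subset_union_right ?_
        have himage := convexHull_smul (𝕜 := ℝ) (r L_I) (schedSet N L_I)
        rw [← Set.image_smul, ← Set.image_smul] at himage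
        rw [himage]
        exact Set.mem_image_of_mem _ (div_smul_mem_convexHull_schedSet hLI1 hL s hs)
      have hc : r L • s = ((L * r L) / (L_I * r L_I)) • (r L_I • (((L_I : ℝ) / L) • s)) := by
        rw [smul_smul, smul_smul]
        congr 1
        field_simp
      rw [hc]
      exact (convex_convexHull ℝ _).smul_mem_of_zero_mem hzero hmem
        ⟨div_nonneg (mul_nonneg hLpos.le (hr L)) (mul_pos hI hpos).le,
          div_le_one_of_le₀ hle (mul_pos hI hpos).le⟩
  refine ⟨first, fun x hx => ?_⟩
  simp only [Set.mem_iUnion] at hx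
  obtain ⟨L, hL, s, hs, rfl⟩ := hx
  exact convexHull_mono
    (Set.union_subset_union_right _ (Set.subset_biUnion_of_mem (Set.right_mem_Icc.2 hLI1)))
    (first L hL.1.le hL.2 s hs)
end

section
/- Let θ > 0, C > 0, 0 < F < 1 and let N ≥ 1 be a natural number with N·θ < 1. Define r(L) = (1 - Lθ)·C·F^{L-1} and μ(L) = (1 - Lθ)·C for L ∈ {1,…,N}, and let S_L ⊆ ℝ^N be the set of 0-1 vectors with exactly L ones. Let L_I ∈ {1,…,N} maximize L ↦ L·r(L) over {1,…,N} and let L_P ∈ {1,…,N} maximize L ↦ L·μ(L) over {1,…,N}. Set β = (L_I·r(L_I)) / (L_P·μ(L_P)). Then β ≤ 1, and for every point x in the convex hull of {0} ∪ ⋃_{L=1}^{L_P} { μ(L)·s : s ∈ S_L }, the scaled point β·x lies in the convex hull of {0} ∪ ⋃_{L=1}^{L_I} { r(L)·s : s ∈ S_L }. That is, the imperfect-case stability region contains the fraction β = r_T(L_I)/μ_T(L_P) of the perfect-case stability region. -/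
theorem smul_mem_convexHull_of_forall_smul_mem {E : Type*} [AddCommGroup E] [Module ℝ E]
    {A B : Set E} {c : ℝ} (h : ∀ y ∈ A, c • y ∈ convexHull ℝ B) {x : E}
    (hx : x ∈ convexHull ℝ A) : c • x ∈ convexHull ℝ B :=
  convexHull_min (t := (fun y => c • y) ⁻¹' convexHull ℝ B) h
    ((convex_convexHull ℝ B).smul_preimage c) hx

/-- Averaging over the ways of switching off one active coordinate. -/
theorem schedSet_smul_mem_convexHull_pred {N L : ℕ} {s : Fin N → ℝ}
    (hs : s ∈ schedSet N (L + 1)) :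
    ((L : ℝ) / (L + 1)) • s ∈ convexHull ℝ (schedSet N L) := by
  classical
  obtain ⟨h01, hsum⟩ := hs
  set T : Finset (Fin N) := Finset.univ.filter (fun i => s i = 1) with hT
  have hind : ∀ j, s j = if s j = 1 then 1 else 0 := by
    intro j
    rcases h01 j with h | h <;> simp [h]
  have hcard : (T.card : ℝ) = L + 1 := by
    have h : ∑ j, s j = (T.card : ℝ) := by
      rw [Finset.sum_congr rfl fun j _ => hind j, Finset.sum_boole]
    rw [← h, hsum]
    push_cast
    rfl
  have hdecomp : ∑ i ∈ T, (Pi.single i 1 : Fin N → ℝ) = s := by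
    funext j
    rw [Finset.sum_apply, Finset.sum_pi_single, hind j]
    simp [hT]
  have hcomb : ((L : ℝ) / (L + 1)) • s
      = ∑ i ∈ T, (1 / ((L : ℝ) + 1)) • (s - Pi.single i 1) := by
    rw [← Finset.smul_sum, Finset.sum_sub_distrib, hdecomp, Finset.sum_const,
      ← Nat.cast_smul_eq_nsmul ℝ, hcard]
    funext j
    simp only [Pi.smul_apply, Pi.sub_apply, smul_eq_mul]
    field_simp
    ring
  rw [hcomb]
  refine (convex_convexHull ℝ _).sum_mem (fun i _ => by positivity) ?_ ?_
  · rw [Finset.sum_const, nsmul_eq_mul, hcard]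
    field_simp
  · intro i hi
    have hsi : s i = 1 := (Finset.mem_filter.mp hi).2
    refine subset_convexHull ℝ _ ⟨fun j => ?_, ?_⟩
    · by_cases hj : j = i
      · subst hj
        simp [hsi]
      · simpa [Pi.single_eq_of_ne hj] using h01 j
    · simp [Finset.sum_sub_distrib, hsum]

theorem schedSet_smul_mem_convexHull {N K L : ℕ} (hK : 1 ≤ K) (hKL : K ≤ L) :
    ∀ s ∈ schedSet N L, ((K : ℝ) / L) • s ∈ convexHull ℝ (schedSet N K) := by
  induction L, hKL using Nat.le_induction with
  | base =>
    intro s hs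
    have hK0 : (K : ℝ) ≠ 0 := by positivity
    rw [div_self hK0, one_smul]
    exact subset_convexHull ℝ _ hs
  | succ L hKL ih =>
    intro s hs
    have hL0 : (L : ℝ) ≠ 0 := by
      have : 0 < L := by omega
      positivity
    have h := smul_mem_convexHull_of_forall_smul_mem ih (schedSet_smul_mem_convexHull_pred hs)
    rw [smul_smul] at h
    convert h using 2
    push_cast
    field_simp

/-- In the symmetric system, let `r(L) = (1 - Lθ)·C·F^(L-1)` (imperfect case) and
`μ(L) = (1 - Lθ)·C` (perfect case), let `L_I` maximize `L·r(L)` and `L_P` maximize `L·μ(L)`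
over `{1,…,N}`, and set `β = (L_I·r(L_I))/(L_P·μ(L_P))`. Then `β ≤ 1`, and `β` times any point
of the perfect-case stability region (the convex hull of `{0}` and the points `μ(L) • s`,
`s ∈ S_L`, `1 ≤ L ≤ L_P`) lies in the imperfect-case stability region (the convex hull of `{0}`
and the points `r(L) • s`, `s ∈ S_L`, `1 ≤ L ≤ L_I`). -/
theorem imperfect_achieves_fraction_of_perfect
    (θ C F : ℝ) (hθ : 0 < θ) (hC : 0 < C) (hF0 : 0 < F) (hF1 : F < 1)
    (N : ℕ) (hN : 1 ≤ N) (hNθ : (N : ℝ) * θ < 1)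
    (r μ : ℕ → ℝ)
    (hrdef : ∀ L, r L = (1 - (L : ℝ) * θ) * C * F ^ ((L : ℝ) - 1))
    (hμdef : ∀ L, μ L = (1 - (L : ℝ) * θ) * C)
    (L_I L_P : ℕ) (hLI1 : 1 ≤ L_I) (hLIN : L_I ≤ N) (hLP1 : 1 ≤ L_P) (hLPN : L_P ≤ N)
    (hLImax : ∀ L, 1 ≤ L → L ≤ N → (L : ℝ) * r L ≤ (L_I : ℝ) * r L_I)
    (hLPmax : ∀ L, 1 ≤ L → L ≤ N → (L : ℝ) * μ L ≤ (L_P : ℝ) * μ L_P) :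
    let β : ℝ := ((L_I : ℝ) * r L_I) / ((L_P : ℝ) * μ L_P)
    β ≤ 1 ∧
      ∀ x ∈ convexHull ℝ
          ({0} ∪ ⋃ L ∈ Set.Icc 1 L_P, (fun s => μ L • s) '' schedSet N L),
        β • x ∈ convexHull ℝ
          ({0} ∪ ⋃ L ∈ Set.Icc 1 L_I, (fun s => r L • s) '' schedSet N L) := by
  intro β
  have hμpos : ∀ L, L ≤ N → 0 < μ L := by
    intro L hL
    rw [hμdef]
    have h : (L : ℝ) * θ ≤ N * θ := by gcongr
    exact mul_pos (by linarith) hC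
  have hrμ : ∀ L, r L = μ L * F ^ ((L : ℝ) - 1) := fun L => by rw [hrdef, hμdef]
  have hLI0 : (0 : ℝ) < L_I := by positivity
  have hLP0 : (0 : ℝ) < L_P := by positivity
  have hden : 0 < (L_P : ℝ) * μ L_P := mul_pos hLP0 (hμpos _ hLPN)
  have hrpos : ∀ L, L ≤ N → 0 < r L := fun L hL => by
    rw [hrμ]
    exact mul_pos (hμpos L hL) (Real.rpow_pos_of_pos hF0 _)
  have hβ0 : 0 ≤ β := div_nonneg (mul_pos hLI0 (hrpos _ hLIN)).le hden.le
  have hβF : β ≤ F ^ ((L_I : ℝ) - 1) := by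
    refine (div_le_iff₀ hden).mpr ?_
    rw [hrμ, ← mul_assoc, mul_comm]
    exact mul_le_mul_of_nonneg_left (hLPmax _ hLI1 hLIN) (Real.rpow_pos_of_pos hF0 _).le
  have hLI1' : (1 : ℝ) ≤ L_I := by exact_mod_cast hLI1
  refine ⟨hβF.trans (Real.rpow_le_one hF0.le hF1.le (by linarith)), fun x hx => ?_⟩
  set B : Set (Fin N → ℝ) :=
    {0} ∪ ⋃ L ∈ Set.Icc 1 L_I, (fun s => r L • s) '' schedSet N L
  have hB0 : (0 : Fin N → ℝ) ∈ convexHull ℝ B := subset_convexHull ℝ _ (Or.inl rfl)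
  have hBmem : ∀ L, 1 ≤ L → L ≤ L_I → ∀ s ∈ schedSet N L, r L • s ∈ convexHull ℝ B :=
    fun L h1 h2 s hs => subset_convexHull ℝ _
      (Or.inr (Set.mem_biUnion (Set.mem_Icc.mpr ⟨h1, h2⟩) ⟨s, hs, rfl⟩))
  have hshrink : ∀ (a b : ℝ) (s : Fin N → ℝ), 0 ≤ a → a ≤ b → 0 < b →
      b • s ∈ convexHull ℝ B → a • s ∈ convexHull ℝ B := by
    intro a b s ha hab hb hs
    have h := (convex_convexHull ℝ B).smul_mem_of_zero_mem hB0 hs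
      (t := a / b) ⟨div_nonneg ha hb.le, (div_le_one hb).mpr hab⟩
    rwa [smul_smul, div_mul_cancel₀ _ hb.ne'] at h
  refine smul_mem_convexHull_of_forall_smul_mem ?_ hx
  rintro y (rfl | hy)
  · rwa [smul_zero]
  obtain ⟨L, ⟨hL1, hLLP⟩, s, hs, rfl⟩ := Set.mem_iUnion₂.mp hy
  have hLN : L ≤ N := hLLP.trans hLPN
  have hL0 : (0 : ℝ) < L := by positivity
  have hnonneg : 0 ≤ β * μ L := mul_nonneg hβ0 (hμpos L hLN).le
  simp only [smul_smul]
  rcases le_total L L_I with hle | hle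
  · refine hshrink _ (r L) s hnonneg ?_ (hrpos L hLN) (hBmem L hL1 hle s hs)
    rw [hrμ, mul_comm]
    refine mul_le_mul_of_nonneg_left (hβF.trans ?_) (hμpos L hLN).le
    exact Real.rpow_le_rpow_of_exponent_ge hF0 hF1.le (by gcongr)
  · have hmem := smul_mem_convexHull_of_forall_smul_mem (hBmem L_I hLI1 le_rfl)
      (schedSet_smul_mem_convexHull hLI1 hle s hs)
    rw [smul_smul] at hmem
    have hrI := hrpos L_I hLIN
    refine hshrink _ _ s hnonneg ?_ (by positivity) hmem
    have hβden : β * (L_P * μ L_P) = L_I * r L_I := div_mul_cancel₀ _ hden.ne'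
    rw [← mul_div_assoc, le_div_iff₀ hL0]
    calc β * μ L * L = β * (L * μ L) := by ring
      _ ≤ β * (L_P * μ L_P) := mul_le_mul_of_nonneg_left (hLPmax L hL1 hLN) hβ0
      _ = r L_I * L_I := by rw [hβden, mul_comm]
end

section
/- Let N ≥ 1, let S_L ⊆ ℝ^N denote the set of 0-1 vectors with exactly L ones, let r : ℕ → ℝ be nonnegative, let r_svd > 0, and let 1 ≤ L_I ≤ N. Then the convex hull of {0} ∪ ⋃_{L=1}^{L_I} { r(L)·s : s ∈ S_L } is contained in the convex hull of {0} ∪ { r_svd·e_k : k = 1,…,N } if and only if L·r(L) ≤ r_svd for every L ∈ {1,…,L_I}. Equivalently, the interference-alignment stability region (partially) surpasses the TDMA-SVD stability region if and only if there exists L with 1 ≤ L ≤ L_I such that L·r(L) > r_svd. -/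
/-- The convex hull of `0` and the points `c • e_k` is the corner simplex of size `c`. -/
theorem mem_convexHull_zero_union_smul_single_iff {ι : Type*} [Fintype ι] [DecidableEq ι]
    {c : ℝ} (hc : 0 < c) (x : ι → ℝ) :
    x ∈ convexHull ℝ ({0} ∪ {y : ι → ℝ | ∃ k, y = c • (Pi.single k 1 : ι → ℝ)}) ↔
      (∀ i, 0 ≤ x i) ∧ ∑ i, x i ≤ c := by
  constructor
  · have hconv : Convex ℝ {y : ι → ℝ | (∀ i, 0 ≤ y i) ∧ ∑ i, y i ≤ c} := by
      rintro y ⟨hy, hyc⟩ z ⟨hz, hzc⟩ a b ha hb hab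
      refine ⟨fun i => ?_, ?_⟩
      · have := hy i
        have := hz i
        simp only [Pi.add_apply, Pi.smul_apply, smul_eq_mul]
        positivity
      · simp only [Pi.add_apply, Pi.smul_apply, smul_eq_mul, Finset.sum_add_distrib,
          ← Finset.mul_sum]
        calc a * ∑ i, y i + b * ∑ i, z i ≤ a * c + b * c := by gcongr
          _ = c := by rw [← add_mul, hab, one_mul]
    refine fun hx => convexHull_min ?_ hconv hx
    rintro y (rfl | ⟨k, rfl⟩)
    · exact ⟨fun i => le_rfl, by simpa using hc.le⟩
    · refine ⟨fun i => ?_, ?_⟩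
      · by_cases h : i = k
        · subst h
          simpa using hc.le
        · simp [h]
      · simp [← Finset.mul_sum]
  · rintro ⟨hx, hxc⟩
    have hmem := (convex_convexHull ℝ
      ({0} ∪ {y : ι → ℝ | ∃ k, y = c • (Pi.single k 1 : ι → ℝ)})).sum_mem
      (t := Finset.univ) (w := fun o : Option ι => o.elim (1 - (∑ i, x i) / c) fun i => x i / c)
      (z := fun o => o.elim 0 fun k => c • (Pi.single k 1 : ι → ℝ)) ?_ ?_ ?_
    · convert hmem
      ext i
      simp [Fintype.sum_option, Pi.single_apply, hc.ne']
    · rintro (_ | i) -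
      · simpa using (div_le_one hc).2 hxc
      · exact div_nonneg (hx i) hc.le
    · simp [Fintype.sum_option, Finset.sum_div]
    · rintro (_ | k) -
      · exact subset_convexHull ℝ _ (Or.inl rfl)
      · exact subset_convexHull ℝ _ (Or.inr ⟨k, rfl⟩)

theorem schedSet_nonempty {N L : ℕ} (h : L ≤ N) : (schedSet N L).Nonempty := by
  obtain ⟨t, -, ht⟩ := Finset.exists_subset_card_eq
    (s := (Finset.univ : Finset (Fin N))) (n := L) (by simpa using h)
  refine ⟨fun i => if i ∈ t then 1 else 0, fun i => ?_, by simp [ht]⟩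
  by_cases hi : i ∈ t <;> simp [hi]

theorem sum_smul_of_mem_schedSet {N L : ℕ} {s : Fin N → ℝ} (hs : s ∈ schedSet N L) (a : ℝ) :
    ∑ i, (a • s) i = L * a := by
  simp only [Pi.smul_apply, smul_eq_mul, ← Finset.mul_sum, hs.2, mul_comm]

/-- The interference-alignment stability region (convex hull of `{0}` and the points
`r(L) • s`, `s ∈ S_L`, `1 ≤ L ≤ L_I`) is contained in the TDMA-SVD stability region (convex
hull of `{0}` and the points `r_svd • e_k`) if and only if `L·r(L) ≤ r_svd` for every
`1 ≤ L ≤ L_I`; equivalently, the IA region (partially) surpasses the TDMA-SVD region iff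
there exists `1 ≤ L ≤ L_I` with `L·r(L) > r_svd`. -/
theorem IA_subset_TDMASVD_iff
    (N L_I : ℕ) (hN : 1 ≤ N) (hLI1 : 1 ≤ L_I) (hLIN : L_I ≤ N)
    (r : ℕ → ℝ) (hr : ∀ L, 0 ≤ r L) (r_svd : ℝ) (hsvd : 0 < r_svd) :
    convexHull ℝ ({0} ∪ ⋃ L ∈ Set.Icc 1 L_I, (fun s => r L • s) '' schedSet N L)
        ⊆ convexHull ℝ ({0} ∪ {x : Fin N → ℝ | ∃ k, x = r_svd • (Pi.single k 1 : Fin N → ℝ)})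
      ↔ ∀ L, 1 ≤ L → L ≤ L_I → (L : ℝ) * r L ≤ r_svd := by
  constructor
  · intro h L hL1 hL
    obtain ⟨s, hs⟩ := schedSet_nonempty (hL.trans hLIN)
    have hmem := h (subset_convexHull ℝ _
      (Or.inr (Set.mem_biUnion (Set.mem_Icc.2 ⟨hL1, hL⟩) (Set.mem_image_of_mem _ hs))))
    rw [mem_convexHull_zero_union_smul_single_iff hsvd] at hmem
    exact (sum_smul_of_mem_schedSet hs (r L)).symm.trans_le hmem.2
  · intro h
    refine convexHull_min (Set.union_subset ?_ ?_) (convex_convexHull ℝ _)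
    · exact Set.subset_union_left.trans (subset_convexHull ℝ _)
    · refine Set.iUnion₂_subset fun L hL => ?_
      rintro _ ⟨s, hs, rfl⟩
      refine (mem_convexHull_zero_union_smul_single_iff hsvd _).2 ⟨fun i => ?_, ?_⟩
      · refine mul_nonneg (hr L) ?_
        rcases hs.1 i with hi | hi <;> simp [hi]
      · exact (sum_smul_of_mem_schedSet hs (r L)).trans_le (h L hL.1 hL.2)
end

section
/- Let θ > 0, C > 0, 0 < F < 1, and let 1 ≤ N' ≤ N be naturals with N·θ < 1. Define r(L) = (1 - Lθ)·C·F^{L-1} and let S_L ⊆ ℝ^N be the set of 0-1 vectors with exactly L ones. Assume that L·r(L) ≤ (L+1)·r(L+1) for all 1 ≤ L < N (i.e. N' ≤ N ≤ L_I, the case where the total rate is nondecreasing up to N). Then for every point x in the convex hull of {0} ∪ ⋃_{L=1}^{N} { r(L)·s : s ∈ S_L }, the scaled point (N'·r(N')/(N·r(N)))·x lies in the convex hull of {0} ∪ ⋃_{L=1}^{N'} { r(L)·s : s ∈ S_L }. That is, after reducing the maximum number of pairs from N to N', the stability region achieves at least the fraction r_T(N')/r_T(N) of the original stability region. -/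
/-- If a convex set contains the indicators of all `m`-element sets, then it contains the
indicator of any larger `L`-element set scaled by `m / L`. -/
theorem Convex.smul_indicator_mem {ι : Type*} [DecidableEq ι] {K : Set (ι → ℝ)}
    (hK : Convex ℝ K) {m : ℕ} (hm : 1 ≤ m)
    (h : ∀ T : Finset ι, T.card = m → (fun i => if i ∈ T then (1 : ℝ) else 0) ∈ K)
    {L : ℕ} (hL : m ≤ L) :
    ∀ A : Finset ι, A.card = L →
      ((m : ℝ) / L) • (fun i => if i ∈ A then (1 : ℝ) else 0) ∈ K := by
  induction L, hL using Nat.le_induction with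
  | base =>
    intro A hA
    have hm0 : (m : ℝ) ≠ 0 := by positivity
    rw [div_self hm0, one_smul]
    exact h A hA
  | succ L hL ih =>
    intro A hA
    have hL0 : (L : ℝ) ≠ 0 := by
      have : L ≠ 0 := by omega
      exact_mod_cast this
    have hL1 : (L : ℝ) + 1 ≠ 0 := by positivity
    have key := hK.sum_mem (t := A) (w := fun _ => 1 / ((L : ℝ) + 1))
      (z := fun a => ((m : ℝ) / L) • (fun i => if i ∈ A.erase a then (1 : ℝ) else 0))
      (fun _ _ => by positivity)
      (by rw [Finset.sum_const, hA, nsmul_eq_mul]; push_cast; field_simp)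
      (fun a ha => ih _ (by rw [Finset.card_erase_of_mem ha, hA]; rfl))
    convert key using 1
    ext i
    simp only [Finset.sum_apply, Pi.smul_apply, smul_eq_mul, ← Finset.mul_sum]
    by_cases hi : i ∈ A
    · have hsum : ∑ a ∈ A, (if i ∈ A.erase a then (1 : ℝ) else 0) = L := by
        rw [Finset.sum_boole]
        have : A.filter (fun a => i ∈ A.erase a) = A.erase i := by
          ext a
          simp only [Finset.mem_filter, Finset.mem_erase]
          grind
        rw [this, Finset.card_erase_of_mem hi, hA]
        rfl
      rw [hsum, if_pos hi]
      push_cast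
      field_simp
    · simp [hi]

/-- The indicator of an `L`-element set of users is a schedule with `L` active users. -/
theorem indicator_mem_schedSet {N L : ℕ} {A : Finset (Fin N)} (hA : A.card = L) :
    (fun i => if i ∈ A then (1 : ℝ) else 0) ∈ schedSet N L := by
  refine ⟨fun i => ?_, ?_⟩
  · by_cases hi : i ∈ A <;> simp [hi]
  · simp [hA]

/-- Every schedule with `L` active users is the indicator of an `L`-element set. -/
theorem exists_indicator_of_mem_schedSet {N L : ℕ} {s : Fin N → ℝ} (hs : s ∈ schedSet N L) :
    ∃ A : Finset (Fin N), A.card = L ∧ s = fun i => if i ∈ A then (1 : ℝ) else 0 := by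
  obtain ⟨h01, hsum⟩ := hs
  have heq : s = fun i => if i ∈ Finset.univ.filter (fun i => s i = 1) then (1 : ℝ) else 0 := by
    ext i
    rcases h01 i with h | h <;> simp [h]
  refine ⟨Finset.univ.filter (fun i => s i = 1), ?_, heq⟩
  rw [heq] at hsum
  simpa using hsum

/-- Symmetric imperfect case with `r(L) = (1 - Lθ)·C·F^(L-1)`, in the regime where the total
rate `L·r(L)` is nondecreasing up to `N` (i.e. `N' ≤ N ≤ L_I`): after reducing the maximum
number of pairs from `N` to `N'`, the stability region achieves at least the fraction
`r_T(N')/r_T(N) = (N'·r(N'))/(N·r(N))` of the original stability region — every point `x` of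
the convex hull of `{0} ∪ ⋃_{L=1}^{N} { r(L) • s : s ∈ S_L }`, once scaled by this fraction,
lies in the convex hull of `{0} ∪ ⋃_{L=1}^{N'} { r(L) • s : s ∈ S_L }`. -/
theorem reduce_pairs_fraction
    (θ C F : ℝ) (hθ : 0 < θ) (hC : 0 < C) (hF0 : 0 < F) (hF1 : F < 1)
    (N N' : ℕ) (hN' : 1 ≤ N') (hN'N : N' ≤ N) (hNθ : (N : ℝ) * θ < 1)
    (r : ℕ → ℝ) (hrdef : ∀ L, r L = (1 - (L : ℝ) * θ) * C * F ^ ((L : ℝ) - 1))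
    (hmono : ∀ L, 1 ≤ L → L < N → (L : ℝ) * r L ≤ ((L : ℝ) + 1) * r (L + 1)) :
    ∀ x ∈ convexHull ℝ ({0} ∪ ⋃ L ∈ Set.Icc 1 N, (fun s => r L • s) '' schedSet N L),
      (((N' : ℝ) * r N') / ((N : ℝ) * r N)) • x
        ∈ convexHull ℝ ({0} ∪ ⋃ L ∈ Set.Icc 1 N', (fun s => r L • s) '' schedSet N L) := by
  have hN1 : 1 ≤ N := hN'.trans hN'N
  have hrpos : ∀ L ≤ N, 0 < r L := by
    intro L hL
    rw [hrdef]
    have hLN : (L : ℝ) ≤ N := by exact_mod_cast hL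
    have h1 : 0 < 1 - (L : ℝ) * θ := by nlinarith
    have := Real.rpow_pos_of_pos hF0 ((L : ℝ) - 1)
    positivity
  have htotal : ∀ L, 1 ≤ L → L ≤ N → (L : ℝ) * r L ≤ (N : ℝ) * r N := by
    intro L hL hLN
    induction hLN using Nat.decreasingInduction with
    | self => exact le_rfl
    | of_succ k hk ih =>
      have := ih (by omega)
      push_cast at this
      exact (hmono k hL hk).trans this
  have hNpos : (0 : ℝ) < (N : ℝ) * r N :=
    mul_pos (by exact_mod_cast hN1) (hrpos N le_rfl)
  have hN'0 : (0 : ℝ) < N' := by exact_mod_cast hN'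
  have hr' := hrpos N' hN'N
  set V := {0} ∪ ⋃ L ∈ Set.Icc 1 N', (fun s => r L • s) '' schedSet N L
  set c := ((N' : ℝ) * r N') / ((N : ℝ) * r N) with hc
  have hc0 : 0 ≤ c := by positivity
  have hc1 : c ≤ 1 := (div_le_one hNpos).2 (htotal N' hN' hN'N)
  have hconv : Convex ℝ (convexHull ℝ V) := convex_convexHull ℝ V
  have hzero : (0 : Fin N → ℝ) ∈ convexHull ℝ V := subset_convexHull ℝ V (Or.inl rfl)
  have hvertex : ∀ L, 1 ≤ L → L ≤ N' → ∀ s ∈ schedSet N L, r L • s ∈ convexHull ℝ V := by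
    intro L hL hLN' s hs
    exact subset_convexHull ℝ V
      (Or.inr (Set.mem_biUnion (show L ∈ Set.Icc 1 N' from ⟨hL, hLN'⟩) ⟨s, hs, rfl⟩))
  intro x hx
  suffices hsub : convexHull ℝ ({0} ∪ ⋃ L ∈ Set.Icc 1 N, (fun s => r L • s) '' schedSet N L)
      ⊆ (fun y : Fin N → ℝ => c • y) ⁻¹' convexHull ℝ V from hsub hx
  refine convexHull_min ?_ (hconv.smul_preimage c)
  rintro y (rfl | hy)
  · simpa using hzero
  obtain ⟨L, ⟨hL1, hLN⟩, s, hs, rfl⟩ := Set.mem_iUnion₂.1 hy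
  change c • r L • s ∈ convexHull ℝ V
  rcases le_total L N' with hLN' | hLN'
  · exact hconv.smul_mem_of_zero_mem hzero (hvertex L hL1 hLN' s hs) ⟨hc0, hc1⟩
  · obtain ⟨A, hA, rfl⟩ := exists_indicator_of_mem_schedSet hs
    have havg := (hconv.smul_preimage (r N')).smul_indicator_mem hN'
      (fun T hT => hvertex N' hN' le_rfl _ (indicator_mem_schedSet hT)) hLN' A hA
    have hrL := hrpos L hLN
    have hL0 : (0 : ℝ) < L := by exact_mod_cast hL1
    have hmem := hconv.smul_mem_of_zero_mem hzero havg
      (t := ((L : ℝ) * r L) / ((N : ℝ) * r N))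
      ⟨by positivity, (div_le_one hNpos).2 (htotal L hL1 hLN)⟩
    convert hmem using 1
    simp only [smul_smul]
    congr 1
    rw [hc]
    field_simp
end
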